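/- arXiv:2312.07253 — 2 statements merged into one kernel-verified Lean document; each statement's English description precedes it below -/
import Mathlib

section
/- Let r, m, N, k, a, g, n₁, n₂ be real numbers and let u : ℕ → ℝ be a sequence satisfying u 0 = 24, u 1 = 2r + 8k + 4n₁ + 4n₂ + 6N − 4a + 4 − 14g − 2m, u 2 = 64 + 20r + 80k + 40n₁ + 40n₂ − 120g + 40N − 40a, and u (n+3) = 9·u (n+2) + u (n+1) − 9·u n for all n ∈ ℕ. Then for all n ∈ ℕ, u n = (−N + g + m + 12)·(−1)^n − (1/2)·(−N + a + 3g − 2k − n₁ − n₂ − r/2 − 1)·9^n + (1/2)·(N + a + g − 2k − 2m − n₁ − n₂ − r/2 + 23). -/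
theorem stmt_2 (r m N k a g n₁ n₂ : ℝ) (u : ℕ → ℝ)
    (h0 : u 0 = 24)
    (h1 : u 1 = 2 * r + 8 * k + 4 * n₁ + 4 * n₂ + 6 * N - 4 * a + 4 - 14 * g - 2 * m)
    (h2 : u 2 = 64 + 20 * r + 80 * k + 40 * n₁ + 40 * n₂ - 120 * g + 40 * N - 40 * a)
    (hrec : ∀ n : ℕ, u (n + 3) = 9 * u (n + 2) + u (n + 1) - 9 * u n) :
    ∀ n : ℕ, u n = (-N + g + m + 12) * (-1 : ℝ) ^ n
      - (1 / 2) * (-N + a + 3 * g - 2 * k - n₁ - n₂ - r / 2 - 1) * 9 ^ n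
      + (1 / 2) * (N + a + g - 2 * k - 2 * m - n₁ - n₂ - r / 2 + 23) := by
  intro n
  -- The characteristic polynomial `x³ - 9x² - x + 9` has roots `-1`, `9`, `1`.
  induction n using Nat.strong_induction_on with
  | _ n ih =>
    match n, ih with
    | 0, _ => rw [h0]; ring
    | 1, _ => rw [h1]; ring
    | 2, _ => rw [h2]; ring
    | n + 3, ih =>
      rw [hrec, ih (n + 2) (by omega), ih (n + 1) (by omega), ih n (by omega)]
      ring
end

section
/- Let ζ ∈ ℂ be a primitive 6th root of unity (ζ⁶ = 1 and ζ^k ≠ 1 for 1 ≤ k ≤ 5), and let ℓ, g, p₃₄, p₂₅ be real numbers. If 1 + ζ⁵ = (ℓ − 1)·(1 + ζ)/(1 − ζ)² + (1 − g)·(1 + ζ)/(1 − ζ)² + p₃₄/((1 − ζ³)·(1 − ζ⁴)) + p₂₅/((1 − ζ²)·(1 − ζ⁵)) (an equality in ℂ, with the real numbers regarded as complex numbers), then 3 + 3ℓ − 3g − p₃₄/2 − p₂₅ = 0. -/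
/-!
A primitive sixth root of unity satisfies `ζ² = ζ - 1`, and each term of the hypothesis is then a
rational multiple of `2 - ζ`, because `(1 + ζ) * (2 - ζ) = 3`: the left side is `2 - ζ`, the
curve factor `(1 + ζ) / (1 - ζ)²` is `-(2 - ζ)`, and the two point contributions are
`(2 - ζ) / 6` and `(2 - ζ) / 3`. Cancelling `2 - ζ ≠ 0` gives the relation.
-/

theorem stmt_7 (ζ : ℂ) (hζ6 : ζ ^ 6 = 1) (hζ : ∀ k : ℕ, 1 ≤ k → k ≤ 5 → ζ ^ k ≠ 1)
    (ℓ g p₃₄ p₂₅ : ℝ)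
    (h : 1 + ζ ^ 5 = ((ℓ : ℂ) - 1) * (1 + ζ) / (1 - ζ) ^ 2
      + (1 - (g : ℂ)) * (1 + ζ) / (1 - ζ) ^ 2
      + (p₃₄ : ℂ) / ((1 - ζ ^ 3) * (1 - ζ ^ 4))
      + (p₂₅ : ℂ) / ((1 - ζ ^ 2) * (1 - ζ ^ 5))) :
    3 + 3 * ℓ - 3 * g - p₃₄ / 2 - p₂₅ = 0 := by
  have h2 := hζ 2 (by norm_num) (by norm_num)
  have h3 := hζ 3 (by norm_num) (by norm_num)
  -- `ζ⁶ - 1 = (ζ³ - 1) (ζ + 1) (ζ² - ζ + 1)`, and the first two factors do not vanish.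
  have hne1 : 1 + ζ ≠ 0 := fun h0 => h2 (by linear_combination (ζ - 1) * h0)
  have hq : ζ ^ 2 = ζ - 1 := by
    have hprod : ((ζ ^ 3 - 1) * (1 + ζ)) * (ζ ^ 2 - ζ + 1) = 0 := by
      linear_combination hζ6
    have := (mul_eq_zero.mp hprod).resolve_left (mul_ne_zero (sub_ne_zero.mpr h3) hne1)
    linear_combination this
  have e3 : ζ ^ 3 = -1 := by linear_combination (ζ + 1) * hq
  have e4 : ζ ^ 4 = -ζ := by linear_combination ζ * e3
  have e5 : ζ ^ 5 = 1 - ζ := by linear_combination ζ * e4 - hq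
  have hne0 : ζ ≠ 0 := by
    rintro rfl
    norm_num at hζ6
  have hmul : (1 + ζ) * (2 - ζ) = 3 := by linear_combination -hq
  have hne2 : 2 - ζ ≠ 0 := fun h0 => by simp [h0] at hmul
  have c1 : (1 + ζ) / (1 - ζ) ^ 2 = -(2 - ζ) := by
    have hd : (1 - ζ) ^ 2 = -ζ := by linear_combination hq
    rw [hd, div_eq_iff (neg_ne_zero.mpr hne0)]
    linear_combination hq
  have c2 : (p₃₄ : ℂ) / ((1 - ζ ^ 3) * (1 - ζ ^ 4)) = p₃₄ * (2 - ζ) / 6 := by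
    have hd : (1 - ζ ^ 3) * (1 - ζ ^ 4) = 2 * (1 + ζ) := by rw [e3, e4]; ring
    rw [hd, div_eq_iff (mul_ne_zero two_ne_zero hne1)]
    linear_combination -(p₃₄ : ℂ) / 3 * hmul
  have c3 : (p₂₅ : ℂ) / ((1 - ζ ^ 2) * (1 - ζ ^ 5)) = p₂₅ * (2 - ζ) / 3 := by
    have hd : (1 - ζ ^ 2) * (1 - ζ ^ 5) = 1 + ζ := by
      rw [e5, hq]
      linear_combination -hq
    rw [hd, div_eq_iff hne1]
    linear_combination -(p₂₅ : ℂ) / 3 * hmul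
  rw [mul_div_assoc, mul_div_assoc, c1, c2, c3, e5] at h
  have key : (2 - ζ) * (3 + 3 * (ℓ : ℂ) - 3 * g - p₃₄ / 2 - p₂₅) = 0 := by
    linear_combination 3 * h
  exact_mod_cast (mul_eq_zero.mp key).resolve_left hne2
end
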